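/- Let G be a finite simple graph containing four distinct vertices v₁, v₂, v₃, v₄ forming a 4-cycle (the edges v₁v₂, v₂v₃, v₃v₄, v₄v₁ all lie in G) with no chords (v₁ is not adjacent to v₃ and v₂ is not adjacent to v₄), such that deg(v₁) = deg(v₃) = 3 and deg(v₂) = deg(v₄) = 4. If G − {v₁, v₂, v₃, v₄} is (2,1)-decomposable, then G is (2,1)-decomposable. (This is the reducibility of the (3,4,3,4)-face configuration from Lemma 2.8.) -/

import Mathlib

open SimpleGraph

/-- A graph `H` is `d`-degenerate: every induced subgraph on a nonempty vertex set
has a vertex of degree at most `d` (within that induced subgraph). -/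
def Degenerate {V : Type*} (d : ℕ) (H : SimpleGraph V) : Prop :=
  ∀ s : Set V, s.Nonempty → ∃ v ∈ s, (H.neighborSet v ∩ s).ncard ≤ d

/-- The graph `H` has maximum degree at most `h`. -/
def MaxDegreeLE {V : Type*} (h : ℕ) (H : SimpleGraph V) : Prop :=
  ∀ v : V, (H.neighborSet v).ncard ≤ h

/-- A graph `G` is `(d,h)`-decomposable: its edge set is partitioned into the edge
sets of two spanning subgraphs `H₁` and `H₂`, where `H₁` is `d`-degenerate and
`H₂` has maximum degree at most `h`. -/
def Decomposable {V : Type*} (d h : ℕ) (G : SimpleGraph V) : Prop :=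
  ∃ H₁ H₂ : SimpleGraph V, H₁ ⊔ H₂ = G ∧ Disjoint H₁ H₂ ∧
    Degenerate d H₁ ∧ MaxDegreeLE h H₂

/-!
Put `v₁v₂` and `v₃v₄` into the bounded-degree part and every other edge meeting the cycle into the
degenerate part. Deleting `v₁, v₃, v₄, v₂` in this order then exposes few neighbours each time:
`v₁` and `v₃` have each lost an edge to the matching, while `v₄` and `v₂` have each lost their
neighbours `v₁` and `v₃`.
-/

section

variable {V W : Type*} {d h k : ℕ} {S : Set V} {v : V} {G H K : SimpleGraph V}

/-- `H` is `d`-degenerate on the vertex set `S`: the subgraph of `H` induced on `S` is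
`d`-degenerate, stated with subsets of `S` instead of subsets of a subtype so that vertices can be
added to `S` one at a time. -/
def DegenerateOn (d : ℕ) (H : SimpleGraph V) (S : Set V) : Prop :=
  ∀ s ⊆ S, s.Nonempty → ∃ v ∈ s, (H.neighborSet v ∩ s).ncard ≤ d

theorem degenerateOn_univ : DegenerateOn d H Set.univ ↔ Degenerate d H := by
  simp only [DegenerateOn, Degenerate, Set.subset_univ, forall_const]

theorem Degenerate.degenerateOn_of_induce (hH : Degenerate d (H.induce S)) :
    DegenerateOn d H S := by
  rintro s hsS ⟨x, hx⟩
  obtain ⟨v, hvs, hv⟩ := hH (Subtype.val ⁻¹' s) ⟨⟨x, hsS hx⟩, hx⟩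
  have hrange : H.neighborSet v ∩ s ⊆ Set.range (Subtype.val : S → V) := by
    rw [Subtype.range_coe]
    exact Set.inter_subset_right.trans hsS
  rw [neighborSet_induce, ← Set.preimage_inter,
    Set.ncard_preimage_of_injective_subset_range Subtype.val_injective hrange] at hv
  exact ⟨v, hvs, hv⟩

theorem DegenerateOn.insert (hH : DegenerateOn d H S) (hv : (H.neighborSet v ∩ S).encard ≤ d) :
    DegenerateOn d H (insert v S) := by
  intro s hs hne
  by_cases hvs : v ∈ s
  · have hsub : H.neighborSet v ∩ s ⊆ H.neighborSet v ∩ S := fun x ⟨hvx, hxs⟩ =>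
      ⟨hvx, (hs hxs).resolve_left hvx.ne'⟩
    exact ⟨v, hvs, (Set.encard_le_coe_iff_finite_ncard_le.1
      ((Set.encard_le_encard hsub).trans hv)).2⟩
  · exact hH s ((Set.subset_insert_iff_of_notMem hvs).1 hs) hne

theorem MaxDegreeLE.mono (hH : MaxDegreeLE h H) (hhk : h ≤ k) : MaxDegreeLE k H :=
  fun v => (hH v).trans hhk

theorem MaxDegreeLE.sup (hH : MaxDegreeLE h H) (hK : MaxDegreeLE h K)
    (hHK : Disjoint H.support K.support) : MaxDegreeLE h (H ⊔ K) := by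
  intro v
  rw [neighborSet_sup]
  by_cases hv : v ∈ H.support
  · have hvK : K.IsIsolated v := (notMem_support_iff_isIsolated _).1 (hHK.notMem_of_mem_left hv)
    rw [hvK.neighborSet_eq_empty, Set.union_empty]
    exact hH v
  · have hvH : H.IsIsolated v := (notMem_support_iff_isIsolated _).1 hv
    rw [hvH.neighborSet_eq_empty, Set.empty_union]
    exact hK v

theorem MaxDegreeLE.map (hH : MaxDegreeLE h H) (f : V ↪ W) : MaxDegreeLE h (H.map f) := by
  intro w
  by_cases hw : w ∈ (H.map f).support
  · rw [support_map] at hw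
    obtain ⟨v, -, rfl⟩ := hw
    rw [neighborSet_map, Set.ncard_image_of_injective _ f.injective]
    exact hH v
  · rw [((notMem_support_iff_isIsolated _).1 hw).neighborSet_eq_empty, Set.ncard_empty]
    exact Nat.zero_le h

theorem maxDegreeLE_one_edge (a b : V) : MaxDegreeLE 1 (edge a b) := by
  intro v
  have hsub : ((edge a b).neighborSet v).Subsingleton := by
    intro x hx y hy
    rw [mem_neighborSet, edge_adj] at hx hy
    grind
  exact (Set.ncard_le_one hsub.finite).2 fun x hx y hy => hsub hx hy

theorem support_edge_subset (a b : V) : (edge a b).support ⊆ {a, b} := by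
  intro v hv
  obtain ⟨w, hvw⟩ := (mem_support _).1 hv
  rw [edge_adj] at hvw
  grind

theorem support_sup : (H ⊔ K).support = H.support ∪ K.support := by
  ext v
  simp only [Set.mem_union, mem_support, sup_adj, exists_or]

theorem maxDegreeLE_one_edge_sup_edge {a b x y : V} (hdisj : Disjoint ({a, b} : Set V) {x, y}) :
    MaxDegreeLE 1 (edge a b ⊔ edge x y) :=
  (maxDegreeLE_one_edge a b).sup (maxDegreeLE_one_edge x y)
    (hdisj.mono (support_edge_subset a b) (support_edge_subset x y))

theorem Decomposable.exists_extension_of_induce {M : SimpleGraph V}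
    (hG : Decomposable d h (G.induce S)) (hMG : M ≤ G) (hM : MaxDegreeLE h M)
    (hMS : Disjoint M.support S) :
    ∃ H₁ H₂ : SimpleGraph V, H₁ ⊔ H₂ = G ∧ Disjoint H₁ H₂ ∧ DegenerateOn d H₁ S ∧
      MaxDegreeLE h H₂ ∧ M ≤ H₂ := by
  obtain ⟨K₁, K₂, hsup, hdisj, hK₁, hK₂⟩ := hG
  have hle : K₂.spanningCoe ⊔ M ≤ G :=
    sup_le ((map_le_iff_le_comap _ _ _).2 (le_sup_right.trans_eq hsup)) hMG
  have hinduce_right : (K₂.spanningCoe ⊔ M).induce S = K₂ := by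
    ext a b
    have hMab : ¬ M.Adj a b := fun hab => hMS.notMem_of_mem_left hab.mem_support_left a.2
    simp [hMab]
  have hinduce_left : (G \ (K₂.spanningCoe ⊔ M)).induce S = K₁ := by
    calc (G \ (K₂.spanningCoe ⊔ M)).induce S
        = G.induce S \ (K₂.spanningCoe ⊔ M).induce S := rfl
      _ = K₁ := by rw [hinduce_right, ← hsup, sup_sdiff_right_self, hdisj.sdiff_eq_left]
  refine ⟨G \ (K₂.spanningCoe ⊔ M), K₂.spanningCoe ⊔ M, sdiff_sup_cancel hle,
    disjoint_sdiff_self_left, ?_, (hK₂.map _).sup hM ?_, le_sup_right⟩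
  · exact Degenerate.degenerateOn_of_induce (hinduce_left ▸ hK₁)
  · rw [support_spanningCoe]
    exact hMS.symm.mono_left (Subtype.coe_image_subset S _)

theorem encard_le_of_encard_le_add_encard {α : Type*} {A B N : Set α} {n : ℕ∞}
    (hAN : A ⊆ N) (hBN : B ⊆ N) (hAB : Disjoint A B) (hB : B.Finite)
    (hN : N.encard ≤ n + B.encard) : A.encard ≤ n := by
  refine (ENat.add_le_add_iff_right hB.encard_lt_top.ne).1 ?_
  calc A.encard + B.encard = (A ∪ B).encard := (Set.encard_union_eq hAB).symm
    _ ≤ N.encard := Set.encard_le_encard (Set.union_subset hAN hBN)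
    _ ≤ n + B.encard := hN

theorem encard_neighborSet_inter_le_of_adj {w : V} (hHG : H ≤ G) (hw : G.Adj v w)
    (hw' : w ∉ H.neighborSet v ∩ S) (hv : (G.neighborSet v).encard ≤ d + 1) :
    (H.neighborSet v ∩ S).encard ≤ d :=
  encard_le_of_encard_le_add_encard (B := {w}) (fun _ hx => hHG hx.1)
    (Set.singleton_subset_iff.2 hw) (Set.disjoint_singleton_right.2 hw') (Set.finite_singleton w)
    (by rwa [Set.encard_singleton])

theorem encard_neighborSet_inter_le_of_adj_of_adj {a b : V} (hHG : H ≤ G) (hab : a ≠ b)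
    (ha : G.Adj v a) (hb : G.Adj v b) (haS : a ∉ S) (hbS : b ∉ S)
    (hv : (G.neighborSet v).encard ≤ d + 2) : (H.neighborSet v ∩ S).encard ≤ d :=
  encard_le_of_encard_le_add_encard (B := {a, b}) (fun _ hx => hHG hx.1)
    (Set.pair_subset ha hb) (by grind) (Set.toFinite _)
    (by rwa [Set.encard_pair hab])

theorem DegenerateOn.degenerate_of_fourCycle {v₁ v₂ v₃ v₄ : V} (hHG : H ≤ G) (hne13 : v₁ ≠ v₃)
    (h12 : G.Adj v₁ v₂) (h23 : G.Adj v₂ v₃) (h34 : G.Adj v₃ v₄) (h41 : G.Adj v₄ v₁)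
    (hH12 : ¬ H.Adj v₁ v₂) (hH34 : ¬ H.Adj v₃ v₄)
    (hd1 : (G.neighborSet v₁).encard ≤ d + 1) (hd3 : (G.neighborSet v₃).encard ≤ d + 1)
    (hd2 : (G.neighborSet v₂).encard ≤ d + 2) (hd4 : (G.neighborSet v₄).encard ≤ d + 2)
    (hH : DegenerateOn d H {u : V | u ≠ v₁ ∧ u ≠ v₂ ∧ u ≠ v₃ ∧ u ≠ v₄}) :
    Degenerate d H := by
  have hinsert₂ := hH.insert (encard_neighborSet_inter_le_of_adj_of_adj hHG hne13
    h12.symm h23 (by simp) (by simp) hd2)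
  have hinsert₄ := hinsert₂.insert (encard_neighborSet_inter_le_of_adj_of_adj hHG hne13
    h41 h34.symm (by simp [h12.ne]) (by simp [h23.ne']) hd4)
  have hinsert₃ := hinsert₄.insert (encard_neighborSet_inter_le_of_adj hHG h34
    (fun hmem => hH34 hmem.1) hd3)
  have hinsert₁ := hinsert₃.insert (encard_neighborSet_inter_le_of_adj hHG h12
    (fun hmem => hH12 hmem.1) hd1)
  rw [← degenerateOn_univ]
  convert hinsert₁ using 1
  ext u
  simp only [Set.mem_univ, Set.mem_insert_iff, Set.mem_ofPred_eq, true_iff]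
  tauto

theorem stmt_8_general {v₁ v₂ v₃ v₄ : V} (hh : 1 ≤ h) (hne13 : v₁ ≠ v₃) (hne24 : v₂ ≠ v₄)
    (h12 : G.Adj v₁ v₂) (h23 : G.Adj v₂ v₃) (h34 : G.Adj v₃ v₄) (h41 : G.Adj v₄ v₁)
    (hd1 : (G.neighborSet v₁).encard ≤ d + 1) (hd3 : (G.neighborSet v₃).encard ≤ d + 1)
    (hd2 : (G.neighborSet v₂).encard ≤ d + 2) (hd4 : (G.neighborSet v₄).encard ≤ d + 2)
    (hdec : Decomposable d h
      (G.induce {u : V | u ≠ v₁ ∧ u ≠ v₂ ∧ u ≠ v₃ ∧ u ≠ v₄})) :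
    Decomposable d h G := by
  have hdisj : Disjoint ({v₁, v₂} : Set V) {v₃, v₄} := by
    simp [hne13.symm, hne24.symm, h41.ne, h23.ne']
  have hMG : edge v₁ v₂ ⊔ edge v₃ v₄ ≤ G :=
    sup_le ((edge_le_iff _).2 (.inr h12)) ((edge_le_iff _).2 (.inr h34))
  have hMS : Disjoint (edge v₁ v₂ ⊔ edge v₃ v₄).support
      {u : V | u ≠ v₁ ∧ u ≠ v₂ ∧ u ≠ v₃ ∧ u ≠ v₄} := by
    rw [support_sup]
    refine Set.disjoint_of_subset_left
      (Set.union_subset_union (support_edge_subset v₁ v₂) (support_edge_subset v₃ v₄)) ?_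
    grind
  obtain ⟨H₁, H₂, hsup, hH, hH₁, hH₂, hM⟩ := hdec.exists_extension_of_induce hMG
    ((maxDegreeLE_one_edge_sup_edge hdisj).mono hh) hMS
  have hH₁12 : ¬ H₁.Adj v₁ v₂ := fun hadj =>
    disjoint_left.1 hH _ _ hadj (((edge_le_iff _).1 (le_sup_left.trans hM)).resolve_left h12.ne)
  have hH₁34 : ¬ H₁.Adj v₃ v₄ := fun hadj =>
    disjoint_left.1 hH _ _ hadj (((edge_le_iff _).1 (le_sup_right.trans hM)).resolve_left h34.ne)
  have hH₁G : H₁ ≤ G := hsup ▸ le_sup_left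
  exact ⟨H₁, H₂, hsup, hH, hH₁.degenerate_of_fourCycle hH₁G hne13 h12 h23 h34 h41 hH₁12 hH₁34
    hd1 hd3 hd2 hd4, hH₂⟩

end

theorem stmt_8 {V : Type*} [Fintype V] (G : SimpleGraph V) (v₁ v₂ v₃ v₄ : V)
    (hne12 : v₁ ≠ v₂) (hne13 : v₁ ≠ v₃) (hne14 : v₁ ≠ v₄)
    (hne23 : v₂ ≠ v₃) (hne24 : v₂ ≠ v₄) (hne34 : v₃ ≠ v₄)
    (h12 : G.Adj v₁ v₂) (h23 : G.Adj v₂ v₃) (h34 : G.Adj v₃ v₄) (h41 : G.Adj v₄ v₁)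
    (h13 : ¬ G.Adj v₁ v₃) (h24 : ¬ G.Adj v₂ v₄)
    (hd1 : (G.neighborSet v₁).ncard = 3) (hd3 : (G.neighborSet v₃).ncard = 3)
    (hd2 : (G.neighborSet v₂).ncard = 4) (hd4 : (G.neighborSet v₄).ncard = 4)
    (hdec : Decomposable 2 1
      (G.induce {u : V | u ≠ v₁ ∧ u ≠ v₂ ∧ u ≠ v₃ ∧ u ≠ v₄})) :
    Decomposable 2 1 G := by
  have encard_le {v : V} {n : ℕ} (hv : (G.neighborSet v).ncard = n) :
      (G.neighborSet v).encard ≤ n :=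
    Set.encard_le_coe_iff_finite_ncard_le.2 ⟨Set.toFinite _, hv.le⟩
  exact stmt_8_general le_rfl hne13 hne24 h12 h23 h34 h41 (encard_le hd1) (encard_le hd3)
    (encard_le hd2) (encard_le hd4) hdec
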